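/- arXiv:2401.15308 — 8 statements merged into one kernel-verified Lean document; each statement's English description precedes it below -/
import Mathlib

section
/- Let F be a finite field, let h ∈ F[x] be a monic polynomial of degree u ≥ 1, let 0 < r ≤ u, and let y_1, …, y_s ∈ F be pairwise distinct. Suppose f ∈ F[x] has deg(f) < s·u and, for each i ∈ {1,…,s}, the remainder f_i of f upon division by h(x) − y_i has degree < r; write f_i(x) = Σ_{j=0}^{r−1} e_{i,j} x^j. Then there exist polynomials H_0, …, H_{r−1} ∈ F[x] with deg(H_j) ≤ s − 1 such that H_j(y_i) = e_{i,j} for all i ∈ {1,…,s} and j ∈ {0,…,r−1}, and for every y ∈ F the remainder of f upon division by h(x) − y equals Σ_{j=0}^{r−1} H_j(y) x^j. -/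
open Polynomial

theorem aux_deg {F : Type*} [Field F] (h P : F[X]) (u s j : ℕ) (hdeg : h.natDegree = u)
    (hj : j < u) (hP : P.degree < (s : WithBot ℕ)) :
    (P.comp h * X ^ j).degree < ((s * u : ℕ) : WithBot ℕ) := by
  by_cases h0 : P.comp h = 0
  · rw [h0, zero_mul, degree_zero]
    exact WithBot.bot_lt_coe _
  · have hP0 : P ≠ 0 := by
      rintro rfl
      simp at h0
    have hn : P.natDegree < s := (natDegree_lt_iff_degree_lt hP0).2 hP
    rw [← natDegree_lt_iff_degree_lt (mul_ne_zero h0 (pow_ne_zero _ X_ne_zero)),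
      natDegree_mul h0 (pow_ne_zero _ X_ne_zero), natDegree_comp, natDegree_X_pow, hdeg]
    calc P.natDegree * u + j < P.natDegree * u + u := by omega
      _ = (P.natDegree + 1) * u := by ring
      _ ≤ s * u := Nat.mul_le_mul_right _ hn

theorem aux_dvd {F : Type*} [Field F] (h P : F[X]) (z : F) :
    (h - C z) ∣ P.comp h - C (P.eval z) := by
  obtain ⟨q, hq⟩ := X_sub_C_dvd_sub_C_eval (a := z) (p := P)
  refine ⟨q.comp h, ?_⟩
  have := congrArg (fun p => p.comp h) hq
  simpa using this

/-- Lemma 3 (cross-rack RS property): if `f` has degree `< s*u` and its remainder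
modulo `h - y i` has degree `< r` for `s` distinct points `y i`, then there are
polynomials `H j` of degree `≤ s - 1` interpolating the coefficients of the
residues, and for every `y` the remainder of `f` mod `h - y` is `∑ H j (y) x^j`. -/
theorem stmt_0 {F : Type*} [Field F] [Fintype F]
    (h : F[X]) (u r s : ℕ) (hu : 1 ≤ u) (hmonic : h.Monic) (hdeg : h.natDegree = u)
    (hr : 0 < r) (hru : r ≤ u)
    (y : Fin s → F) (hy : Function.Injective y)
    (f : F[X]) (hf : f.degree < ((s * u : ℕ) : WithBot ℕ))
    (hres : ∀ i : Fin s, (f %ₘ (h - C (y i))).degree < ((r : ℕ) : WithBot ℕ)) :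
    ∃ H : Fin r → F[X],
      (∀ j, (H j).degree ≤ ((s - 1 : ℕ) : WithBot ℕ)) ∧
      (∀ (i : Fin s) (j : Fin r),
        (H j).eval (y i) = (f %ₘ (h - C (y i))).coeff (j : ℕ)) ∧
      (∀ z : F, f %ₘ (h - C z) = ∑ j : Fin r, C ((H j).eval z) * X ^ (j : ℕ)) := by
  classical
  have hmon : ∀ z : F, (h - C z).Monic := fun z =>
    hmonic.sub_of_left (by
      refine lt_of_le_of_lt degree_C_le ?_
      rw [← natDegree_pos_iff_degree_pos]; omega)
  have hnd : ∀ z : F, (h - C z).natDegree = u := fun z => by rw [natDegree_sub_C, hdeg]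
  have hyi : Set.InjOn y (Finset.univ : Finset (Fin s)) := hy.injOn
  let H : Fin r → F[X] := fun j =>
    Lagrange.interpolate Finset.univ y (fun i => (f %ₘ (h - C (y i))).coeff (j : ℕ))
  have hHlt : ∀ j, (H j).degree < (s : WithBot ℕ) := fun j => by
    simpa [H] using Lagrange.degree_interpolate_lt (s := Finset.univ)
      (fun i => (f %ₘ (h - C (y i))).coeff (j : ℕ)) hyi
  have hHev : ∀ (i : Fin s) (j : Fin r),
      (H j).eval (y i) = (f %ₘ (h - C (y i))).coeff (j : ℕ) := fun i j =>
    Lagrange.eval_interpolate_at_node _ hyi (Finset.mem_univ i)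
  let g : F[X] := ∑ j : Fin r, (H j).comp h * X ^ (j : ℕ)
  have hgdeg : g.degree < ((s * u : ℕ) : WithBot ℕ) := by
    refine lt_of_le_of_lt (degree_sum_le _ _) ?_
    rw [Finset.sup_lt_iff (WithBot.bot_lt_coe _)]
    intro j _
    exact aux_deg h (H j) u s j hdeg (by omega) (hHlt j)
  have hgmod : ∀ z : F, g %ₘ (h - C z) = ∑ j : Fin r, C ((H j).eval z) * X ^ (j : ℕ) := by
    intro z
    have hd : (h - C z) ∣ g - ∑ j : Fin r, C ((H j).eval z) * X ^ (j : ℕ) := by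
      rw [← Finset.sum_sub_distrib]
      refine Finset.dvd_sum fun j _ => ?_
      rw [← sub_mul]
      exact (aux_dvd h (H j) z).mul_right _
    obtain ⟨q, hq⟩ := hd
    refine (div_modByMonic_unique q _ (hmon z) ⟨?_, ?_⟩).2
    · rw [← hq]; ring
    · rw [degree_eq_natDegree (hmon z).ne_zero, hnd]
      refine lt_of_le_of_lt (degree_sum_le _ _) ?_
      rw [Finset.sup_lt_iff (WithBot.bot_lt_coe _)]
      intro j _
      refine lt_of_le_of_lt (degree_C_mul_X_pow_le _ _) ?_
      exact_mod_cast lt_of_lt_of_le j.2 hru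
  have hfg : f = g := by
    have hdvd : ∀ i : Fin s, (h - C (y i)) ∣ f - g := by
      intro i
      rw [← modByMonic_eq_zero_iff_dvd (hmon _), sub_modByMonic, hgmod, sub_eq_zero]
      simp only [hHev]
      rw [Fin.sum_univ_eq_sum_range
        (fun j => C ((f %ₘ (h - C (y i))).coeff j) * X ^ j) r]
      by_cases h0 : f %ₘ (h - C (y i)) = 0
      · simp [h0]
      · exact as_sum_range_C_mul_X_pow' _ ((natDegree_lt_iff_degree_lt h0).2 (hres i))
    have hprod : (∏ i : Fin s, (h - C (y i))) ∣ f - g := by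
      refine Fintype.prod_dvd_of_coprime ?_ hdvd
      intro i j hij
      have := (pairwise_coprime_X_sub_C hy hij).map (compRingHom h)
      simpa using this
    have hpm : (∏ i : Fin s, (h - C (y i))).Monic := monic_prod_of_monic _ _ fun i _ => hmon _
    have hpn : (∏ i : Fin s, (h - C (y i))).natDegree = s * u := by
      rw [natDegree_prod_of_monic _ _ fun i _ => hmon _]
      simp only [hnd]; simp
    rw [← sub_eq_zero]
    refine eq_zero_of_dvd_of_degree_lt hprod ?_
    rw [degree_eq_natDegree hpm.ne_zero, hpn]
    exact lt_of_le_of_lt (degree_sub_le _ _) (max_lt hf hgdeg)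
  refine ⟨H, fun j => ?_, hHev, fun z => ?_⟩
  · simpa [H] using Lagrange.degree_interpolate_le (s := Finset.univ)
      (fun i => (f %ₘ (h - C (y i))).coeff (j : ℕ)) hyi
  · exact (congrArg (fun p => p %ₘ (h - C z)) hfg).trans (hgmod z)
end

section
/- Let F be a finite field, let h ∈ F[x] be a monic polynomial of degree u ≥ 1, let 0 < r ≤ u, and let y_1, …, y_s ∈ F be pairwise distinct. Suppose f ∈ F[x] has deg(f) < s·u and, for each i ∈ {1,…,s}, the remainder f_i of f upon division by h(x) − y_i has degree < r. Then f(x) = Σ_{i=1}^{s} f_i(x) · Π_{j≠i} (h(x) − y_j)/(y_i − y_j); in particular deg(f) ≤ u(s−1) + r − 1. -/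
open Polynomial

/-- CRT/Lagrange interpolation form: a polynomial of degree `< s*u` whose residues
modulo the pairwise coprime moduli `h - y i` have degree `< r` equals
`∑ i, f_i(x) * ∏_{j ≠ i} (h(x) - y j)/(y i - y j)`; in particular its degree is
at most `u(s-1) + r - 1`. -/
theorem stmt_1 {F : Type*} [Field F] [Fintype F]
    (h : F[X]) (u r s : ℕ) (hu : 1 ≤ u) (hs : 1 ≤ s)
    (hmonic : h.Monic) (hdeg : h.natDegree = u)
    (hr : 0 < r) (hru : r ≤ u)
    (y : Fin s → F) (hy : Function.Injective y)
    (f : F[X]) (hf : f.degree < ((s * u : ℕ) : WithBot ℕ))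
    (hres : ∀ i : Fin s, (f %ₘ (h - C (y i))).degree < ((r : ℕ) : WithBot ℕ)) :
    f = ∑ i : Fin s, (f %ₘ (h - C (y i))) *
        ∏ j ∈ Finset.univ.erase i, (C ((y i - y j)⁻¹) * (h - C (y j))) ∧
    f.degree ≤ ((u * (s - 1) + r - 1 : ℕ) : WithBot ℕ) := by
  classical
  have hmdeg : ∀ a : F, (h - C a).natDegree = u := fun a => by
    rw [natDegree_sub_C, hdeg]
  have hmmon : ∀ a : F, (h - C a).Monic := fun a => by
    apply hmonic.sub_of_left
    refine lt_of_le_of_lt degree_C_le ?_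
    rw [← natDegree_pos_iff_degree_pos]
    omega
  set g : F[X] := ∑ i : Fin s, (f %ₘ (h - C (y i))) *
        ∏ j ∈ Finset.univ.erase i, (C ((y i - y j)⁻¹) * (h - C (y j))) with hg
  have hgdeg : g.natDegree ≤ u * (s - 1) + r - 1 := by
    apply natDegree_sum_le_of_forall_le
    intro i _
    have h1 : (f %ₘ (h - C (y i))).natDegree ≤ r - 1 := by
      have := hres i
      by_cases h0 : f %ₘ (h - C (y i)) = 0
      · simp [h0]
      · have := (natDegree_lt_iff_degree_lt h0).2 this
        omega
    have h2 : (∏ j ∈ Finset.univ.erase i, (C ((y i - y j)⁻¹) * (h - C (y j)))).natDegree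
        ≤ u * (s - 1) := by
      refine (natDegree_prod_le _ _).trans ?_
      refine (Finset.sum_le_card_nsmul _ _ u ?_).trans ?_
      · intro j _
        exact (natDegree_C_mul_le _ _).trans (hmdeg _).le
      · simp [Finset.card_erase_of_mem, mul_comm]
    refine natDegree_mul_le.trans ?_
    omega
  have hdvd : ∀ k : Fin s, (h - C (y k)) ∣ f - g := by
    intro k
    have hP : (h - C (y k)) ∣
        (∏ j ∈ Finset.univ.erase k, (C ((y k - y j)⁻¹) * (h - C (y j)))) - 1 := by
      apply Finset.prod_induction _ (fun x => (h - C (y k)) ∣ x - 1)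
      · intro a b ha hb
        have : a * b - 1 = (a - 1) * b + (b - 1) := by ring
        rw [this]
        exact dvd_add (ha.mul_right _) hb
      · simp
      · intro j hj
        have hne : y k - y j ≠ 0 := sub_ne_zero.2 fun e => (Finset.ne_of_mem_erase hj) (hy e).symm
        refine ⟨C ((y k - y j)⁻¹), ?_⟩
        have h1 : C ((y k - y j)⁻¹) * (C (y k) - C (y j)) = (1 : F[X]) := by
          rw [← C_sub, ← C_mul, inv_mul_cancel₀ hne, C_1]
        linear_combination h1
    have hF : (h - C (y k)) ∣ f - f %ₘ (h - C (y k)) :=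
      ⟨f /ₘ (h - C (y k)), by linear_combination -(modByMonic_add_div f (h - C (y k)))⟩
    have hR : (h - C (y k)) ∣ ∑ i ∈ Finset.univ.erase k, (f %ₘ (h - C (y i))) *
        ∏ j ∈ Finset.univ.erase i, (C ((y i - y j)⁻¹) * (h - C (y j))) := by
      apply Finset.dvd_sum
      intro i hi
      apply Dvd.dvd.mul_left
      refine (Dvd.intro_left _ rfl).trans (Finset.dvd_prod_of_mem _ (a := k) ?_)
      exact Finset.mem_erase.2 ⟨(Finset.ne_of_mem_erase hi).symm, Finset.mem_univ _⟩
    have e := Finset.add_sum_erase Finset.univ (fun i : Fin s => (f %ₘ (h - C (y i))) *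
        ∏ j ∈ Finset.univ.erase i, (C ((y i - y j)⁻¹) * (h - C (y j)))) (Finset.mem_univ k)
    rw [← hg] at e
    have := dvd_sub (dvd_sub hF (hP.mul_left (f %ₘ (h - C (y k))))) hR
    convert this using 1
    rw [← e]
    ring
  have hprod : (∏ k : Fin s, (h - C (y k))) ∣ f - g := by
    apply Finset.prod_dvd_of_coprime
    · intro i _ j _ hij
      have hc := isCoprime_X_sub_C_of_isUnit_sub
        (sub_ne_zero.2 fun e => hij (hy e) : y i - y j ≠ 0).isUnit
      have := hc.map (compRingHom h)
      simpa [Function.onFun] using this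
    · intro k _
      exact hdvd k
  have hpm : (∏ k : Fin s, (h - C (y k))).Monic := monic_prod_of_monic _ _ fun k _ => hmmon _
  have hpd : (∏ k : Fin s, (h - C (y k))).natDegree = s * u := by
    rw [natDegree_prod_of_monic _ _ fun k _ => hmmon _]
    simp only [hmdeg]
    simp
  have hlt : u * (s - 1) + r - 1 < s * u := by
    obtain ⟨t, rfl⟩ : ∃ t, s = t + 1 := ⟨s - 1, by omega⟩
    have : (t + 1) * u = u * t + u := by ring
    rw [this, Nat.add_sub_cancel]
    omega
  have hgd : g.degree ≤ ((u * (s - 1) + r - 1 : ℕ) : WithBot ℕ) :=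
    natDegree_le_iff_degree_le.1 hgdeg
  have hfg : f = g := by
    rw [← sub_eq_zero]
    refine eq_zero_of_dvd_of_degree_lt hprod ?_
    rw [degree_eq_natDegree hpm.ne_zero, hpd]
    refine lt_of_le_of_lt (degree_sub_le _ _) (max_lt hf (lt_of_le_of_lt hgd ?_))
    exact_mod_cast hlt
  exact ⟨hfg, hfg ▸ hgd⟩
end

section
/- Let F be a finite field, let h ∈ F[x] be a monic polynomial of degree u ≥ 1, let 0 < r ≤ u, let y_1, …, y_k ∈ F be pairwise distinct, and let f_1, …, f_k ∈ F[x] each have degree < r. Then there exists a unique polynomial f ∈ F[x] with deg(f) < u(k−1) + r such that f ≡ f_i (mod h(x) − y_i) for every i ∈ {1,…,k}. -/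
open Polynomial

/-- Existence and uniqueness of the encoding polynomial: given `k` pairwise
distinct points `y i` and residues `g i` of degree `< r`, there is a unique
polynomial `f` of degree `< u(k-1) + r` with `f ≡ g i (mod h - y i)` for all `i`. -/
theorem stmt_2 {F : Type*} [Field F] [Fintype F]
    (h : F[X]) (u r k : ℕ) (hu : 1 ≤ u) (hmonic : h.Monic) (hdeg : h.natDegree = u)
    (hr : 0 < r) (hru : r ≤ u) (hk : 0 < k)
    (y : Fin k → F) (hy : Function.Injective y)
    (g : Fin k → F[X]) (hg : ∀ i, (g i).degree < ((r : ℕ) : WithBot ℕ)) :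
    ∃! f : F[X], f.degree < ((u * (k - 1) + r : ℕ) : WithBot ℕ) ∧
      ∀ i : Fin k, (h - C (y i)) ∣ (f - g i) := by
  classical
  have hdvd : ∀ (p : F[X]) (a : F), (h - C a) ∣ (p.comp h - C (p.eval a)) := by
    intro p a
    have h1 : (X - C a) ∣ p - C (p.eval a) := X_sub_C_dvd_sub_C_eval
    obtain ⟨q, hq⟩ := h1
    refine ⟨q.comp h, ?_⟩
    have := congrArg (fun p => p.comp h) hq
    simpa using this
  have hinj : Set.InjOn y (↑(Finset.univ : Finset (Fin k))) := hy.injOn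
  refine existsUnique_of_exists_of_unique
    ⟨∑ i, g i * (Lagrange.basis Finset.univ y i).comp h, ?_, ?_⟩ ?_
  · rw [← mem_degreeLT]
    refine Submodule.sum_mem _ fun i _ => ?_
    rw [mem_degreeLT]
    refine degree_le_natDegree.trans_lt ?_
    rw [Nat.cast_lt]
    refine natDegree_mul_le.trans_lt ?_
    have h1 : (g i).natDegree < r := by
      by_cases h0 : g i = 0
      · simpa [h0] using hr
      · exact (natDegree_lt_iff_degree_lt h0).2 (hg i)
    have h2 : (Lagrange.basis Finset.univ y i).natDegree = k - 1 := by
      apply natDegree_eq_of_degree_eq_some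
      simpa using Lagrange.degree_basis hinj (Finset.mem_univ i)
    rw [natDegree_comp, h2, hdeg, mul_comm]
    omega
  · intro j
    have e : (∑ i, g i * (Lagrange.basis Finset.univ y i).comp h) - g j
        = ∑ i, g i * ((Lagrange.basis Finset.univ y i).comp h
            - C ((Lagrange.basis Finset.univ y i).eval (y j))) := by
      simp only [mul_sub, Finset.sum_sub_distrib]
      congr 1
      rw [Finset.sum_eq_single j]
      · rw [Lagrange.eval_basis_self hinj (Finset.mem_univ j)]; simp
      · intro b _ hb
        rw [Lagrange.eval_basis_of_ne hb (Finset.mem_univ j)]; simp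
      · simp
    rw [e]
    exact Finset.dvd_sum fun i _ => (hdvd _ _).mul_left _
  · rintro f₁ f₂ ⟨hd₁, hf₁⟩ ⟨hd₂, hf₂⟩
    have hlt : ∀ i, (C (y i)).degree < h.degree := fun i => by
      refine degree_C_le.trans_lt ?_
      rw [degree_eq_natDegree hmonic.ne_zero, hdeg]
      exact_mod_cast hu
    have hm : ∀ i, (h - C (y i)).Monic := fun i => hmonic.sub_of_left (hlt i)
    have hp : (∏ i, (h - C (y i))) ∣ f₁ - f₂ := by
      apply Fintype.prod_dvd_of_coprime
      · intro i j hij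
        have hne : y j - y i ≠ 0 := sub_ne_zero.2 fun e => hij (hy e.symm)
        refine ⟨C (y j - y i)⁻¹, - C (y j - y i)⁻¹, ?_⟩
        have : C (y j - y i)⁻¹ * C (y j - y i) = (1 : F[X]) := by
          rw [← C_mul, inv_mul_cancel₀ hne, C_1]
        rw [← this, C_sub]
        ring
      · intro i
        have := dvd_sub (hf₁ i) (hf₂ i)
        simpa using this
    have hpd : (∏ i, (h - C (y i))).natDegree = u * k := by
      rw [natDegree_prod_of_monic _ _ fun i _ => hm i]
      simp [natDegree_sub_C, hdeg, mul_comm]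
    rw [← sub_eq_zero]
    refine eq_zero_of_dvd_of_degree_lt hp ?_
    refine ((degree_sub_le _ _).trans_lt (max_lt hd₁ hd₂)).trans_le ?_
    rw [degree_eq_natDegree (monic_prod_of_monic _ _ fun i _ => hm i).ne_zero, hpd, Nat.cast_le]
    obtain ⟨m, rfl⟩ : ∃ m, k = m + 1 := ⟨k - 1, by omega⟩
    rw [Nat.add_sub_cancel, mul_add]
    omega
end

section
/- Let F be a finite field, let h ∈ F[x] be a monic polynomial of degree u ≥ 1, let 0 < r ≤ u, and let y_1, …, y_k ∈ F be pairwise distinct. Then the set Ψ(k,u,r) = { f ∈ F[x] : deg(f) < u(k−1) + r and, for each i ∈ {1,…,k}, the remainder of f upon division by h(x) − y_i has degree < r } is an F-linear subspace of F[x] of dimension r·k. -/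
open Polynomial

theorem stmt_3_lag {F : Type*} [Field F] (h : F[X]) (L : F[X]) (a : F) :
    (h - C a) ∣ L.comp h - C (L.eval a) := by
  have h1 := sub_dvd_eval_sub h (C a) (L.map C)
  rwa [← Polynomial.eval₂_eq_eval_map, ← Polynomial.comp, Polynomial.eval_map, Polynomial.eval₂_at_apply] at h1

/-- The set `Ψ(k,u,r)` of encoding polynomials, i.e. polynomials of degree
`< u(k-1) + r` whose remainder modulo `h - y i` has degree `< r` for each of the
`k` pairwise distinct points `y i`, is an `F`-linear subspace of `F[X]` of
dimension `r * k`. -/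
theorem stmt_3 {F : Type*} [Field F] [Fintype F]
    (h : F[X]) (u r k : ℕ) (hu : 1 ≤ u) (hmonic : h.Monic) (hdeg : h.natDegree = u)
    (hr : 0 < r) (hru : r ≤ u) (hk : 0 < k)
    (y : Fin k → F) (hy : Function.Injective y) :
    ∃ S : Submodule F F[X],
      (S : Set F[X]) =
        {f : F[X] | f.degree < ((u * (k - 1) + r : ℕ) : WithBot ℕ) ∧
          ∀ i : Fin k, (f %ₘ (h - C (y i))).degree < ((r : ℕ) : WithBot ℕ)} ∧
      Module.finrank F S = r * k := by
  have hd : h.degree = u := by rw [degree_eq_natDegree hmonic.ne_zero, hdeg]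
  have hlt (a : F) : (C a).degree < h.degree := by
    refine degree_C_le.trans_lt ?_
    rw [hd]; exact_mod_cast hu
  have hm (i) : (h - C (y i)).Monic := hmonic.sub_of_left (hlt _)
  have hdi (i) : (h - C (y i)).degree = u := by rw [degree_sub_eq_left_of_degree_lt (hlt _), hd]
  let S : Submodule F F[X] := degreeLT F (u * (k - 1) + r) ⊓
    ⨅ i, (degreeLT F r).comap (modByMonicHom (h - C (y i)))
  have hS (f : F[X]) : f ∈ S ↔ f.degree < ((u * (k - 1) + r : ℕ) : WithBot ℕ) ∧
          ∀ i : Fin k, (f %ₘ (h - C (y i))).degree < ((r : ℕ) : WithBot ℕ) := by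
    simp only [S, Submodule.mem_inf, Submodule.mem_iInf, Submodule.mem_comap, mem_degreeLT]
    rfl
  refine ⟨S, Set.ext hS, ?_⟩
  let Φ : S →ₗ[F] (Fin k → degreeLT F r) := LinearMap.pi fun i =>
    ((modByMonicHom (h - C (y i))).comp S.subtype).codRestrict _
      fun f => mem_degreeLT.2 (((hS _).1 f.2).2 i)
  have hΦ (f : S) (i) : ((Φ f i : degreeLT F r) : F[X]) = (f : F[X]) %ₘ (h - C (y i)) := rfl
  have hinj : Function.Injective Φ := by
    rw [← LinearMap.ker_eq_bot, LinearMap.ker_eq_bot']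
    intro f hf
    have hdv (i) : (h - C (y i)) ∣ (f : F[X]) := by
      rw [← modByMonic_eq_zero_iff_dvd (hm i), ← hΦ, hf]; rfl
    have hprod : (∏ i, (h - C (y i))) ∣ (f : F[X]) := by
      refine Finset.prod_dvd_of_coprime ?_ fun i _ => hdv i
      intro i _ j _ hij
      have hne : y j - y i ≠ 0 := sub_ne_zero.2 fun e => hij (hy e.symm)
      refine ⟨C (y j - y i)⁻¹, -C (y j - y i)⁻¹, ?_⟩
      have : C (y j - y i)⁻¹ * C (y j - y i) = (1 : F[X]) := by
        rw [← C_mul, inv_mul_cancel₀ hne, C_1]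
      rw [← this, C_sub]; ring
    apply Subtype.ext
    refine eq_zero_of_dvd_of_degree_lt hprod (((hS _).1 f.2).1.trans_le ?_)
    rw [degree_prod, Finset.sum_congr rfl fun i _ => hdi i]
    simp only [Finset.sum_const, Finset.card_univ, Fintype.card_fin, nsmul_eq_mul]
    obtain ⟨m, rfl⟩ : ∃ m, k = m + 1 := ⟨k - 1, by omega⟩
    norm_cast
    simp only [Nat.add_sub_cancel]
    nlinarith
  have hsurj : Function.Surjective Φ := by
    intro g
    let L (i : Fin k) : F[X] := Lagrange.basis Finset.univ y i
    let f : F[X] := ∑ i, (g i : F[X]) * (L i).comp h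
    have hgd (i) : (g i : F[X]).degree < (r : ℕ) := mem_degreeLT.1 (g i).2
    have hmod (j) : f %ₘ (h - C (y j)) = g j := by
      have h1 : (g j : F[X]) %ₘ (h - C (y j)) = g j := by
        rw [modByMonic_eq_self_iff (hm j), hdi]
        exact (hgd j).trans_le (by exact_mod_cast hru)
      rw [← h1]
      refine modByMonic_eq_of_dvd_sub (hm j) ?_
      have h2 : (g j : F[X]) = ∑ i, (g i : F[X]) * C ((L i).eval (y j)) := by
        rw [Finset.sum_eq_single j]
        · rw [Lagrange.eval_basis_self hy.injOn (Finset.mem_univ _)]; simp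
        · intro i _ hij
          rw [Lagrange.eval_basis_of_ne hij (Finset.mem_univ _)]; simp
        · simp
      rw [h2, ← Finset.sum_sub_distrib]
      refine Finset.dvd_sum fun i _ => ?_
      rw [← mul_sub]
      exact (stmt_3_lag _ _ _).mul_left _
    have hfS : f ∈ S := by
      refine (hS f).2 ⟨?_, fun i => by rw [hmod]; exact hgd i⟩
      rw [← mem_degreeLT]
      refine Submodule.sum_mem _ fun i _ => mem_degreeLT.2 ?_
      rcases eq_or_ne (g i : F[X]) 0 with h0 | h0
      · rw [h0, zero_mul, degree_zero]; exact WithBot.bot_lt_coe _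
      have hn := (natDegree_lt_iff_degree_lt h0).2 (hgd i)
      have hL : (L i).natDegree = k - 1 := by
        apply natDegree_eq_of_degree_eq_some
        rw [Lagrange.degree_basis hy.injOn (Finset.mem_univ _)]; simp
      refine degree_le_natDegree.trans_lt ?_
      have h3 := natDegree_mul_le (p := (g i : F[X])) (q := (L i).comp h)
      rw [natDegree_comp, hL, hdeg, mul_comm] at h3
      have : ((g i : F[X]) * (L i).comp h).natDegree < u * (k - 1) + r := by
        rw [mul_comm, mul_comm u]
        rw [mul_comm (k-1)] at *
        omega
      exact_mod_cast this
    exact ⟨⟨f, hfS⟩, funext fun i => Subtype.ext (by rw [hΦ]; exact hmod i)⟩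
  rw [(LinearEquiv.ofBijective Φ ⟨hinj, hsurj⟩).finrank_eq,
    ((LinearEquiv.piCongrRight fun _ : Fin k => degreeLTEquiv F r)).finrank_eq]
  rw [Module.finrank_pi_fintype]
  simp [mul_comm]
end

section
/- Let F be a finite field, let h ∈ F[x] be a monic polynomial of degree u, let 0 < r < u, let 0 < k̄ < n̄, let y_1, …, y_{n̄} ∈ F be pairwise distinct, and for each i ∈ {1,…,n̄} let A_i ⊆ F be a set such that h(α) = y_i for every α ∈ A_i. Suppose f ∈ F[x] satisfies deg(f) < u(k̄−1) + r and, for each i ∈ {1,…,k̄}, the remainder of f upon division by h(x) − y_i has degree < r. Then for EVERY i ∈ {1,…,n̄}, the remainder f_i of f upon division by h(x) − y_i has degree < r, and f(α) = f_i(α) for every α ∈ A_i. -/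
open Polynomial

lemma aux_deg_s4 {F : Type*} [Field F] (p : F[X]) (N : ℕ) (hN : 0 < N) :
    p.degree < (N : WithBot ℕ) ↔ p.natDegree < N := by
  by_cases hp : p = 0
  · subst hp
    simp [hN]
  · exact (natDegree_lt_iff_degree_lt hp).symm

lemma aux_main {F : Type*} [Field F] (h : F[X]) (r : ℕ)
    (hmonic : h.Monic) (hr : 0 < r) (hru : r < h.natDegree) (n : ℕ) :
    ∀ (f : F[X]) (S : Finset F), S.card = n → f.natDegree < h.natDegree * n + r →
      (∀ s ∈ S, (f %ₘ (h - C s)).natDegree < r) →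
      ∀ y : F, (f %ₘ (h - C y)).natDegree < r := by
  classical
  have hlt : ∀ y : F, (C y).degree < h.degree := fun y =>
    lt_of_le_of_lt degree_C_le (natDegree_pos_iff_degree_pos.1 (by omega))
  have hm : ∀ y : F, (h - C y).Monic := fun y => hmonic.sub_of_left (hlt y)
  have hd : ∀ y : F, (h - C y).natDegree = h.natDegree := fun y => natDegree_sub_C
  have hdd : ∀ y : F, (h - C y).degree = h.degree := fun y =>
    degree_sub_eq_left_of_degree_lt (hlt y)
  induction n with
  | zero =>
    intro f S _ hf _ y
    rw [(modByMonic_eq_self_iff (hm y)).2]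
    · omega
    · rw [hdd y]
      exact degree_lt_degree (by omega)
  | succ n ih =>
    intro f S hS hf hres
    obtain ⟨s, hs⟩ := Finset.card_pos.1 (by omega : 0 < S.card)
    have h1 := hres s hs
    have key : ∀ y : F, f %ₘ (h - C y) =
        C (y - s) * ((f /ₘ (h - C s)) %ₘ (h - C y)) + f %ₘ (h - C s) := by
      intro y
      have e1 := modByMonic_add_div f (h - C s)
      have e2 := modByMonic_add_div (f /ₘ (h - C s)) (h - C y)
      refine (div_modByMonic_unique
        ((f /ₘ (h - C s)) + C (y - s) * ((f /ₘ (h - C s)) /ₘ (h - C y))) _ (hm y) ⟨?_, ?_⟩).2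
      · simp only [C_sub]
        linear_combination e1 + (C y - C s) * e2
      · refine lt_of_le_of_lt (degree_add_le _ _) (max_lt ?_ ?_)
        · rw [← smul_eq_C_mul]
          exact lt_of_le_of_lt (degree_smul_le _ _) (degree_modByMonic_lt _ (hm y))
        · rw [hdd y, ← hdd s]
          exact degree_modByMonic_lt _ (hm s)
    have hg := ih (f /ₘ (h - C s)) (S.erase s) (by rw [Finset.card_erase_of_mem hs]; omega)
      (by rw [natDegree_divByMonic _ (hm s), hd s]; rw [mul_add] at hf; omega)
      (by
        intro t ht
        obtain ⟨hts, htS⟩ := Finset.mem_erase.1 ht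
        have h2 := hres t htS
        have h3 : C (t - s) * ((f /ₘ (h - C s)) %ₘ (h - C t)) =
          f %ₘ (h - C t) - f %ₘ (h - C s) := by rw [key t]; ring
        rw [← natDegree_C_mul (sub_ne_zero.2 hts), h3]
        exact lt_of_le_of_lt (natDegree_sub_le _ _) (max_lt h2 h1))
    intro y
    rw [key y]
    exact lt_of_le_of_lt (natDegree_add_le _ _)
      (max_lt (lt_of_le_of_lt (natDegree_C_mul_le _ _) (hg y)) h1)

/-- Theorem 2(a): if the good polynomial `h` takes the constant value `y i` on
each set `A i`, and the encoding polynomial `f` (degree `< u(k̄-1)+r`, residues of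
degree `< r` modulo `h - y i` for `i < k̄`) is given, then for EVERY `i` the
remainder of `f` modulo `h - y i` has degree `< r` and agrees with `f` on `A i`. -/
theorem stmt_4 {F : Type*} [Field F] [Fintype F]
    (h : F[X]) (u r kb nb : ℕ)
    (hmonic : h.Monic) (hdeg : h.natDegree = u) (hr : 0 < r) (hru : r < u)
    (hk : 0 < kb) (hkn : kb < nb)
    (y : Fin nb → F) (hy : Function.Injective y)
    (A : Fin nb → Set F) (hA : ∀ i : Fin nb, ∀ α ∈ A i, h.eval α = y i)
    (f : F[X]) (hf : f.degree < ((u * (kb - 1) + r : ℕ) : WithBot ℕ))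
    (hres : ∀ i : Fin nb, (i : ℕ) < kb →
      (f %ₘ (h - C (y i))).degree < ((r : ℕ) : WithBot ℕ)) :
    ∀ i : Fin nb,
      (f %ₘ (h - C (y i))).degree < ((r : ℕ) : WithBot ℕ) ∧
      ∀ α ∈ A i, f.eval α = (f %ₘ (h - C (y i))).eval α := by
  intro i
  subst hdeg
  refine ⟨?_, ?_⟩
  · rw [aux_deg_s4 _ _ hr]
    rw [aux_deg_s4 _ _ (by omega)] at hf
    let e : Fin (kb - 1) → F := fun j => y ⟨j, by omega⟩
    have he : Function.Injective e := by
      intro a b hab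
      have := hy hab
      simpa [Fin.ext_iff] using this
    refine aux_main h r hmonic hr hru (kb - 1) f
      (Finset.univ.map ⟨e, he⟩) (by simp) hf ?_ (y i)
    intro s hs
    simp only [Finset.mem_map, Finset.mem_univ, true_and, Function.Embedding.coeFn_mk] at hs
    obtain ⟨j, rfl⟩ := hs
    exact (aux_deg_s4 _ _ hr).1 (hres ⟨j, by omega⟩ (by have := j.2; simp only; omega))
  · intro α hα
    have e1 := congrArg (eval α) (modByMonic_add_div f (h - C (y i)))
    simp only [eval_add, eval_mul, eval_sub, eval_C, hA i α hα, sub_self, zero_mul, add_zero] at e1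
    exact e1.symm
end

section
/- Let F be a finite field, let h ∈ F[x] be a monic polynomial of degree u, let 0 < r < u, let 0 < k̄ < n̄, and let y_1, …, y_{n̄} ∈ F be pairwise distinct. Suppose f ∈ F[x] satisfies deg(f) < u(k̄−1) + r and, for each i ∈ {1,…,k̄}, the remainder of f upon division by h(x) − y_i has degree < r. Then for each j ∈ {0,…,r−1} there exists a polynomial H_j ∈ F[x] with deg(H_j) < k̄ such that for every i ∈ {1,…,n̄}, the coefficient of x^j in the remainder of f upon division by h(x) − y_i equals H_j(y_i). -/
open Polynomial

theorem aux_hadic {F : Type*} [Field F] (h : F[X]) (u : ℕ) (hmonic : h.Monic)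
    (hdeg : h.natDegree = u) (hu : 0 < u) (j : ℕ) (m : ℕ) :
    ∀ f : F[X], f.natDegree < u * (m + 1) →
      ∃ H : F[X], H.natDegree < m + 1 ∧
        ∀ c : F, H.eval c = (f %ₘ (h - C c)).coeff j := by
  have hd : h.degree = (u : WithBot ℕ) := by
    rw [degree_eq_natDegree hmonic.ne_zero, hdeg]
  have hlt : ∀ c : F, (C c).degree < h.degree := fun c =>
    lt_of_le_of_lt degree_C_le (by rw [hd]; exact_mod_cast hu)
  have hm : ∀ c : F, (h - C c).Monic := fun c => hmonic.sub_of_left (hlt c)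
  have hdc : ∀ c : F, (h - C c).degree = (u : WithBot ℕ) := fun c => by
    rw [degree_sub_eq_left_of_degree_lt (hlt c), hd]
  induction m with
  | zero =>
    intro f hf
    refine ⟨C (f.coeff j), by simp, fun c => ?_⟩
    rw [(modByMonic_eq_self_iff (hm c)).2, eval_C]
    rw [hdc c]
    exact lt_of_le_of_lt degree_le_natDegree (by simpa using hf)
  | succ m ih =>
    intro f hf
    have hq : (f /ₘ h).natDegree < u * (m + 1) := by
      rw [natDegree_divByMonic f hmonic, hdeg]
      have : u * (m + 1 + 1) = u * (m + 1) + u := by ring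
      have : 0 < u * (m + 1) := by positivity
      omega
    obtain ⟨H, hH, hE⟩ := ih _ hq
    refine ⟨C ((f %ₘ h).coeff j) + X * H, ?_, fun c => ?_⟩
    · refine lt_of_le_of_lt (natDegree_add_le _ _) ?_
      have := natDegree_mul_le (p := (X : F[X])) (q := H)
      rw [natDegree_X] at this
      rw [natDegree_C]
      omega
    · have key : f %ₘ (h - C c) = f %ₘ h + C c * ((f /ₘ h) %ₘ (h - C c)) := by
        refine (div_modByMonic_unique (f /ₘ h + C c * ((f /ₘ h) /ₘ (h - C c))) _ (hm c)
          ⟨?_, ?_⟩).2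
        · have e1 := modByMonic_add_div f h
          have e2 := modByMonic_add_div (f /ₘ h) (h - C c)
          linear_combination e1 + C c * e2
        · refine lt_of_le_of_lt (degree_add_le _ _) (max_lt ?_ ?_)
          · rw [hdc c, ← hd]; exact degree_modByMonic_lt f hmonic
          · rw [← smul_eq_C_mul]
            exact lt_of_le_of_lt (degree_smul_le _ _) (degree_modByMonic_lt _ (hm c))
      rw [key]
      simp [hE c]

/-- Theorem 2(b): for each `j < r`, the `j`-th coefficients of the residues of the
encoding polynomial `f` modulo `h - y i`, `i ∈ {1,…,n̄}`, are the evaluations at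
`y i` of a single polynomial `H j` of degree `< k̄`; i.e. they form a codeword of
the `[n̄, k̄]` Reed–Solomon code with evaluation points `y 1, …, y n̄`. -/
theorem stmt_5 {F : Type*} [Field F] [Fintype F]
    (h : F[X]) (u r kb nb : ℕ)
    (hmonic : h.Monic) (hdeg : h.natDegree = u) (hr : 0 < r) (hru : r < u)
    (hk : 0 < kb) (hkn : kb < nb)
    (y : Fin nb → F) (hy : Function.Injective y)
    (f : F[X]) (hf : f.degree < ((u * (kb - 1) + r : ℕ) : WithBot ℕ))
    (hres : ∀ i : Fin nb, (i : ℕ) < kb →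
      (f %ₘ (h - C (y i))).degree < ((r : ℕ) : WithBot ℕ)) :
    ∀ j : ℕ, j < r →
      ∃ H : F[X], H.degree < ((kb : ℕ) : WithBot ℕ) ∧
        ∀ i : Fin nb, H.eval (y i) = (f %ₘ (h - C (y i))).coeff j := by
  intro j _
  have hu : 0 < u := by omega
  obtain ⟨m, rfl⟩ : ∃ m, kb = m + 1 := ⟨kb - 1, by omega⟩
  have hf2 : f.natDegree < u * (m + 1) := by
    have e : u * (m + 1) = u * m + u := by ring
    rw [Nat.add_sub_cancel] at hf
    by_cases h0 : f = 0
    · rw [h0, natDegree_zero]; positivity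
    · have := (natDegree_lt_iff_degree_lt h0).2 hf
      omega
  obtain ⟨H, hH, hE⟩ := aux_hadic h u hmonic hdeg hu j m f hf2
  exact ⟨H, lt_of_le_of_lt degree_le_natDegree (by exact_mod_cast hH), fun i => hE (y i)⟩
end

section
/- Let F be a finite field, let h ∈ F[x] be a monic polynomial of degree u, let 0 < r < u, let 0 < k̄ < n̄, let y_1, …, y_{n̄} ∈ F be pairwise distinct, and for each i ∈ {1,…,n̄} let A_i ⊆ F be a set of exactly u distinct elements such that h(α) = y_i for every α ∈ A_i. Let f, g ∈ F[x] both satisfy deg < u(k̄−1) + r and have remainders of degree < r upon division by h(x) − y_i for each i ∈ {1,…,k̄}. If for some i ∈ {1,…,n̄} there is a subset B ⊆ A_i with |B| ≥ r such that f(α) = g(α) for all α ∈ B, then f(α) = g(α) for all α ∈ A_i. -/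
open Polynomial

theorem aux_key {F : Type*} [Field F] [DecidableEq F] (h : F[X]) (u r : ℕ)
    (hmonic : h.Monic) (hdeg : h.natDegree = u) (hr : 0 < r) (hru : r < u) (n : ℕ) :
    ∀ (S : Finset F) (p : F[X]), S.card = n → p.natDegree < u * n + r →
      (∀ y ∈ S, p %ₘ (h - C y) ∈ degreeLT F r) →
      ∀ y : F, p %ₘ (h - C y) ∈ degreeLT F r := by
  have hd : ∀ y : F, (h - C y).natDegree = u := fun y => by rw [natDegree_sub_C, hdeg]
  have hm : ∀ y : F, (h - C y).Monic := fun y => by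
    apply hmonic.sub_of_left
    refine lt_of_le_of_lt degree_C_le ?_
    rw [← natDegree_pos_iff_degree_pos]; omega
  have small : ∀ (y : F) (p : F[X]), p.degree < r → p %ₘ (h - C y) = p := fun y p hp => by
    rw [modByMonic_eq_self_iff (hm y), degree_eq_natDegree (hm y).ne_zero, hd]
    exact hp.trans (by exact_mod_cast hru)
  induction n with
  | zero =>
    intro S p _ hp _ y
    have : p.degree < r := by
      refine lt_of_le_of_lt degree_le_natDegree ?_
      have : p.natDegree < r := by simpa using hp
      exact_mod_cast this
    rw [small y p this, mem_degreeLT]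
    exact this
  | succ n ih =>
    intro S p hS hp hres y
    obtain ⟨y0, hy0⟩ : S.Nonempty := by
      rw [← Finset.card_pos]; omega
    set q := p /ₘ (h - C y0) with hq
    set r0 := p %ₘ (h - C y0) with hr0
    have hr0m : r0 ∈ degreeLT F r := hres y0 hy0
    have key : ∀ z : F, p %ₘ (h - C z) = (z - y0) • (q %ₘ (h - C z)) + r0 := by
      intro z
      have e : p = (z - y0) • q + r0 + (h - C z) * q := by
        conv_lhs => rw [← modByMonic_add_div p (h - C y0)]
        rw [← hq, ← hr0, smul_eq_C_mul, C_sub]; ring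
      conv_lhs => rw [e]
      rw [add_modByMonic, add_modByMonic, smul_modByMonic,
        small z r0 (mem_degreeLT.1 hr0m), (modByMonic_eq_zero_iff_dvd (hm z)).2 (dvd_mul_right _ _), add_zero]
    have hqd : q.natDegree < u * n + r := by
      rw [hq, natDegree_divByMonic _ (hm y0), hd]
      rw [mul_add] at hp
      have : 0 < u * n + r := by positivity
      omega
    rw [key]
    refine Submodule.add_mem _ (Submodule.smul_mem _ _ ?_) hr0m
    refine ih (S.erase y0) q (by rw [Finset.card_erase_of_mem hy0]; omega) hqd ?_ y
    intro z hz
    have h1 := hres z (Finset.mem_of_mem_erase hz)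
    rw [key z] at h1
    have h2 := (Submodule.add_mem_iff_left _ hr0m).1 h1
    exact (Submodule.smul_mem_iff _ (sub_ne_zero.2 (Finset.ne_of_mem_erase hz))).1 h2

/-- `(r, u-r+1)`-locality: if two encoding polynomials agree on at least `r`
points of a rack `A i` (a `u`-element set on which the good polynomial `h` is
constant equal to `y i`), then they agree on all of `A i`. -/
theorem stmt_6 {F : Type*} [Field F] [Fintype F]
    (h : F[X]) (u r kb nb : ℕ)
    (hmonic : h.Monic) (hdeg : h.natDegree = u) (hr : 0 < r) (hru : r < u)
    (hk : 0 < kb) (hkn : kb < nb)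
    (y : Fin nb → F) (hy : Function.Injective y)
    (A : Fin nb → Finset F) (hcard : ∀ i, (A i).card = u)
    (hA : ∀ i : Fin nb, ∀ α ∈ A i, h.eval α = y i)
    (f g : F[X])
    (hfdeg : f.degree < ((u * (kb - 1) + r : ℕ) : WithBot ℕ))
    (hgdeg : g.degree < ((u * (kb - 1) + r : ℕ) : WithBot ℕ))
    (hfres : ∀ i : Fin nb, (i : ℕ) < kb →
      (f %ₘ (h - C (y i))).degree < ((r : ℕ) : WithBot ℕ))
    (hgres : ∀ i : Fin nb, (i : ℕ) < kb →
      (g %ₘ (h - C (y i))).degree < ((r : ℕ) : WithBot ℕ))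
    (i : Fin nb) (B : Finset F) (hB : B ⊆ A i) (hBcard : r ≤ B.card)
    (heq : ∀ α ∈ B, f.eval α = g.eval α) :
    ∀ α ∈ A i, f.eval α = g.eval α := by
  classical
  have hp : (f - g).natDegree < u * (kb - 1) + r := by
    have h1 : (f - g).degree < ((u * (kb - 1) + r : ℕ) : WithBot ℕ) :=
      lt_of_le_of_lt (degree_sub_le _ _) (max_lt hfdeg hgdeg)
    by_cases h0 : f - g = 0
    · rw [h0, natDegree_zero]; omega
    · exact (natDegree_lt_iff_degree_lt h0).2 h1
  have hlt : kb - 1 ≤ nb := by omega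
  have hR := aux_key h u r hmonic hdeg hr hru (kb - 1)
    ((Finset.univ : Finset (Fin (kb - 1))).image (y ∘ Fin.castLE hlt)) (f - g)
    (by
      rw [Finset.card_image_of_injective _ (hy.comp (Fin.castLE_injective hlt))]
      simp) hp
    (by
      intro z hz
      obtain ⟨j, -, rfl⟩ := Finset.mem_image.1 hz
      have hj : ((Fin.castLE hlt j : Fin nb) : ℕ) < kb := by
        have := j.2
        simp only [Fin.val_castLE]; omega
      rw [sub_modByMonic, Function.comp_apply]
      exact Submodule.sub_mem _ (mem_degreeLT.2 (hfres _ hj)) (mem_degreeLT.2 (hgres _ hj)))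
    (y i)
  have hev : ∀ α ∈ A i, ((f - g) %ₘ (h - C (y i))).eval α = f.eval α - g.eval α := by
    intro α hα
    have e := congrArg (eval α) (modByMonic_add_div (f - g) (h - C (y i)))
    simpa [hA i α hα] using e
  have hz : (f - g) %ₘ (h - C (y i)) = 0 := by
    refine eq_zero_of_degree_lt_of_eval_finset_eq_zero B
      (lt_of_lt_of_le (mem_degreeLT.1 hR) (by exact_mod_cast hBcard)) ?_
    intro α hα
    rw [hev α (hB hα), heq α hα, sub_self]
  intro α hα
  have := hev α hα
  rw [hz, eval_zero] at this
  exact sub_eq_zero.1 this.symm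
end

section
/- Let F be a finite field, let h ∈ F[x] be a monic polynomial of degree u, let 0 < r < u, let 0 < k̄ < n̄, let y_1, …, y_{n̄} ∈ F be pairwise distinct, and for each i ∈ {1,…,n̄} let A_i ⊆ F be a set of exactly u distinct elements such that h(α) = y_i for every α ∈ A_i. Let f, g ∈ F[x] both satisfy deg < u(k̄−1) + r and have remainders of degree < r upon division by h(x) − y_i for each i ∈ {1,…,k̄}. Fix τ ∈ {1,…,n̄} and an integer ε with u − r < ε ≤ u, and let f_τ, g_τ denote the remainders of f, g upon division by h(x) − y_τ. If the coefficient of x^{r−t} in f_τ equals the coefficient of x^{r−t} in g_τ for every t ∈ {1,…,ε−u+r}, and f(α) = g(α) for all α in some subset B ⊆ A_τ with |B| = u − ε, then f(α) = g(α) for all α ∈ A_τ. -/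
open Polynomial

theorem aux_expand {F : Type*} [Field F] (h : F[X]) (hm : h.Monic) (hu : 0 < h.natDegree) (k : ℕ) :
    ∀ D : F[X], D.degree < ((h.natDegree * k : ℕ) : WithBot ℕ) →
    ∃ d : ℕ → F[X], (∀ j, (d j).degree < h.degree) ∧ D = ∑ j ∈ Finset.range k, d j * h ^ j := by
  have hd : h.degree = (h.natDegree : WithBot ℕ) := degree_eq_natDegree hm.ne_zero
  induction k with
  | zero =>
    intro D hD
    refine ⟨fun _ => 0, fun j => ?_, ?_⟩
    · rw [degree_zero, hd]; exact WithBot.bot_lt_coe _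
    · rw [Finset.sum_range_zero]
      rw [← degree_eq_bot]
      exact Nat.WithBot.lt_zero_iff.mp (by simpa using hD)
  | succ k ih =>
    intro D hD
    have hq : (D /ₘ h).degree < ((h.natDegree * k : ℕ) : WithBot ℕ) := by
      by_cases h0 : D /ₘ h = 0
      · rw [h0, degree_zero]; exact WithBot.bot_lt_coe _
      · have hle : h.degree ≤ D.degree := by
          by_contra hc
          exact h0 ((divByMonic_eq_zero_iff hm).2 (not_le.1 hc))
        have h1 := degree_add_divByMonic hm hle
        have hD0 : D ≠ 0 := by rintro rfl; simp at h0
        rw [degree_eq_natDegree h0, hd, degree_eq_natDegree hD0] at h1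
        rw [degree_eq_natDegree hD0] at hD
        rw [degree_eq_natDegree h0]
        norm_cast at *
        rw [Nat.mul_succ] at hD
        omega
    obtain ⟨d, hd1, hd2⟩ := ih _ hq
    refine ⟨fun j => Nat.casesOn j (D %ₘ h) d, ?_, ?_⟩
    · rintro (_ | j)
      · exact degree_modByMonic_lt _ hm
      · exact hd1 j
    · rw [Finset.sum_range_succ']
      simp only [pow_zero, mul_one]
      have : ∑ j ∈ Finset.range k, d j * h ^ (j+1) = h * (D /ₘ h) := by
        rw [hd2, Finset.mul_sum]
        refine Finset.sum_congr rfl fun j _ => ?_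
        ring
      rw [this, add_comm]
      exact (modByMonic_add_div D h).symm

theorem aux_res {F : Type*} [Field F] (h : F[X]) (hm : h.Monic) (hu : 0 < h.natDegree) (k r : ℕ)
    (D : F[X]) (hD : D.degree < ((h.natDegree * k : ℕ) : WithBot ℕ))
    (S : Finset F) (hS : k ≤ S.card)
    (hres : ∀ y ∈ S, (D %ₘ (h - C y)).degree < (r : WithBot ℕ)) (z : F) :
    (D %ₘ (h - C z)).degree < (r : WithBot ℕ) := by
  obtain ⟨d, hd1, hd2⟩ := aux_expand h hm hu k D hD
  have hC : ∀ y : F, (C y).degree < h.degree := fun y =>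
    lt_of_le_of_lt degree_C_le (natDegree_pos_iff_degree_pos.1 hu)
  have key : ∀ y : F, D %ₘ (h - C y) = ∑ j ∈ Finset.range k, d j * C (y ^ j) := by
    intro y
    have hm' : (h - C y).Monic := hm.sub_of_left (hC y)
    have hdeg' : (h - C y).degree = h.degree := degree_sub_eq_left_of_degree_lt (hC y)
    rw [← (modByMonic_eq_self_iff (p := ∑ j ∈ Finset.range k, d j * C (y ^ j)) hm').2]
    · refine modByMonic_eq_of_dvd_sub hm' ?_
      rw [hd2, ← Finset.sum_sub_distrib]
      refine Finset.dvd_sum fun j _ => ?_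
      rw [← mul_sub, C_pow]
      exact (sub_dvd_pow_sub_pow _ _ _).mul_left _
    · rw [hdeg']
      refine lt_of_le_of_lt (degree_sum_le _ _) ?_
      rw [Finset.sup_lt_iff (lt_of_le_of_lt bot_le (hC y))]
      intro j _
      refine lt_of_le_of_lt (degree_mul_le _ _) ?_
      refine lt_of_le_of_lt (add_le_add_right degree_C_le _) ?_
      rw [add_zero]; exact hd1 j
  rw [degree_lt_iff_coeff_zero]
  intro s hs
  let P : F[X] := ∑ j ∈ Finset.range k, C ((d j).coeff s) * X ^ j
  have hPe : ∀ y, P.eval y = (D %ₘ (h - C y)).coeff s := by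
    intro y
    rw [key, finset_sum_coeff]
    simp only [P, eval_finset_sum, eval_mul, eval_C, eval_pow, eval_X, coeff_mul_C]
  have hPd : P.degree < (k : WithBot ℕ) := by
    refine lt_of_le_of_lt (degree_sum_le _ _) ?_
    rw [Finset.sup_lt_iff (WithBot.bot_lt_coe _)]
    intro j hj
    refine lt_of_le_of_lt (degree_C_mul_X_pow_le _ _) ?_
    exact_mod_cast Finset.mem_range.1 hj
  have hP : P = 0 := by
    refine eq_zero_of_degree_lt_of_eval_finset_eq_zero S (lt_of_lt_of_le hPd (by exact_mod_cast hS)) ?_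
    intro y hy
    rw [hPe]
    exact (degree_lt_iff_coeff_zero _ _).1 (hres y hy) s hs
  rw [← hPe, hP, eval_zero]

/-- Algebraic core of the repair of a rack with `ε > u - r` failures: if the top
`ε - u + r` coefficients of the residue polynomials of two encoding polynomials
modulo `h - y τ` agree, and the polynomials agree on `u - ε` surviving points of
the rack `A τ`, then they agree on all of `A τ`. -/
theorem stmt_13 {F : Type*} [Field F] [Fintype F]
    (h : F[X]) (u r kb nb : ℕ)
    (hmonic : h.Monic) (hdeg : h.natDegree = u) (hr : 0 < r) (hru : r < u)
    (hk : 0 < kb) (hkn : kb < nb)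
    (y : Fin nb → F) (hy : Function.Injective y)
    (A : Fin nb → Finset F) (hcard : ∀ i, (A i).card = u)
    (hA : ∀ i : Fin nb, ∀ α ∈ A i, h.eval α = y i)
    (f g : F[X])
    (hfdeg : f.degree < ((u * (kb - 1) + r : ℕ) : WithBot ℕ))
    (hgdeg : g.degree < ((u * (kb - 1) + r : ℕ) : WithBot ℕ))
    (hfres : ∀ i : Fin nb, (i : ℕ) < kb →
      (f %ₘ (h - C (y i))).degree < ((r : ℕ) : WithBot ℕ))
    (hgres : ∀ i : Fin nb, (i : ℕ) < kb →
      (g %ₘ (h - C (y i))).degree < ((r : ℕ) : WithBot ℕ))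
    (τ : Fin nb) (ε : ℕ) (hε1 : u - r < ε) (hε2 : ε ≤ u)
    (hcoeff : ∀ t : ℕ, 1 ≤ t → t ≤ ε + r - u →
      (f %ₘ (h - C (y τ))).coeff (r - t) = (g %ₘ (h - C (y τ))).coeff (r - t))
    (B : Finset F) (hB : B ⊆ A τ) (hBcard : B.card = u - ε)
    (heq : ∀ α ∈ B, f.eval α = g.eval α) :
    ∀ α ∈ A τ, f.eval α = g.eval α := by
  subst hdeg
  have hu : 0 < h.natDegree := by omega
  have hsub : ∀ p : F[X], (f - g) %ₘ p = f %ₘ p - g %ₘ p := fun p => sub_modByMonic f g p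
  have hle : h.natDegree * (kb - 1) + r ≤ h.natDegree * kb := by
    obtain ⟨k, rfl⟩ : ∃ k, kb = k + 1 := ⟨kb - 1, by omega⟩
    rw [Nat.add_sub_cancel, Nat.mul_succ]; omega
  have hD : (f - g).degree < ((h.natDegree * kb : ℕ) : WithBot ℕ) := by
    refine lt_of_lt_of_le (lt_of_le_of_lt (degree_sub_le f g) (max_lt hfdeg hgdeg)) ?_
    exact_mod_cast hle
  have hτ : ((f - g) %ₘ (h - C (y τ))).degree < (r : WithBot ℕ) := by
    refine aux_res h hmonic hu kb r (f - g) hD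
      ((Finset.univ : Finset (Fin kb)).map ⟨fun i => y (Fin.castLE hkn.le i),
        fun a b hab => Fin.castLE_injective _ (hy hab)⟩) (by simp) ?_ _
    intro z hz
    obtain ⟨i, -, rfl⟩ := Finset.mem_map.1 hz
    rw [hsub]
    exact lt_of_le_of_lt (degree_sub_le _ _) (max_lt (hfres _ i.2) (hgres _ i.2))
  have hmτ : (h - C (y τ)).Monic :=
    hmonic.sub_of_left (lt_of_le_of_lt degree_C_le (natDegree_pos_iff_degree_pos.1 hu))
  have hev : ∀ α ∈ A τ, ((f - g) %ₘ (h - C (y τ))).eval α = f.eval α - g.eval α := by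
    intro α hα
    have h1 := congrArg (eval α) (modByMonic_add_div (f - g) (h - C (y τ)))
    simpa [hA τ α hα] using h1
  have hz : (f - g) %ₘ (h - C (y τ)) = 0 := by
    refine eq_zero_of_degree_lt_of_eval_finset_eq_zero B ?_ ?_
    · rw [hBcard, degree_lt_iff_coeff_zero]
      intro s hs
      by_cases hsr : r ≤ s
      · exact (degree_lt_iff_coeff_zero _ _).1 hτ s hsr
      · have h2 := hcoeff (r - s) (by omega) (by omega)
        rw [show r - (r - s) = s by omega] at h2
        rw [hsub, coeff_sub, h2, sub_self]
    · intro α hα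
      rw [hev α (hB hα), heq α hα, sub_self]
  intro α hα
  have h3 := hev α hα
  rw [hz, eval_zero] at h3
  exact (sub_eq_zero.1 h3.symm)
end
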